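/- Let G be a finite group, let (σ_j)_{j∈J} be a complete family of irreducibles for G, let ρ be an irreducible unitary representation of G on a finite-dimensional complex inner product space V, and let M ⊆ G be a conjugacy class of involutions with representative m₀. For b ∈ V let X(m) = ‖(1/2)(b + ρ(m) b)‖² (a real number). Then Var_{m∈M} X ≤ (1/4) Σ_{j∈J} (χ_j(m₀)/d_j) · s_j(b), where s_j(b) = (d_j/|G|) Σ_{g∈G} conj(χ_j(g)) |⟨b, ρ(g) b⟩|²; here each s_j(b) is a nonnegative real number and each χ_j(m₀) is real, so the right-hand side is real. -/

import Mathlib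

noncomputable section

open scoped BigOperators InnerProductSpace

def IsUnitaryRep {G V : Type*} [Group G] [NormedAddCommGroup V] [InnerProductSpace ℂ V]
    (ρ : Representation ℂ G V) : Prop :=
  ∀ (g : G) (v w : V), ⟪ρ g v, ρ g w⟫_ℂ = ⟪v, w⟫_ℂ

def IsIrreducibleRep {G V : Type*} [Group G] [AddCommGroup V] [Module ℂ V]
    (ρ : Representation ℂ G V) : Prop :=
  (∃ v : V, v ≠ 0) ∧
    ∀ W : Submodule ℂ V, (∀ (g : G) (v : V), v ∈ W → ρ g v ∈ W) → W = ⊥ ∨ W = ⊤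

def RepIso {G V₁ V₂ : Type*} [Group G] [AddCommGroup V₁] [Module ℂ V₁]
    [AddCommGroup V₂] [Module ℂ V₂]
    (ρ₁ : Representation ℂ G V₁) (ρ₂ : Representation ℂ G V₂) : Prop :=
  ∃ e : V₁ ≃ₗ[ℂ] V₂, ∀ (g : G) (v : V₁), e (ρ₁ g v) = ρ₂ g (e v)

def repChar {G V : Type*} [Group G] [AddCommGroup V] [Module ℂ V]
    (ρ : Representation ℂ G V) (g : G) : ℂ := LinearMap.trace ℂ V (ρ g)

def IsCompleteFamily {G : Type*} [Group G] {J : Type*}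
    (W : J → Type*) [∀ j, NormedAddCommGroup (W j)] [∀ j, InnerProductSpace ℂ (W j)]
    [∀ j, FiniteDimensional ℂ (W j)]
    (σ : ∀ j, Representation ℂ G (W j)) : Prop :=
  (∀ j, IsUnitaryRep (σ j)) ∧ (∀ j, IsIrreducibleRep (σ j)) ∧
    (∀ j j', j ≠ j' → ¬ RepIso (σ j) (σ j')) ∧
    (∀ (U : Type) [AddCommGroup U] [Module ℂ U] [FiniteDimensional ℂ U]
      (τ : Representation ℂ G U), IsIrreducibleRep τ → ∃ j, RepIso τ (σ j))

def isoProj {G V : Type*} [Group G] [Fintype G] [AddCommGroup V] [Module ℂ V]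
    (d : ℕ) (χ : G → ℂ) (ρ : Representation ℂ G V) : V →ₗ[ℂ] V :=
  ((d : ℂ) / (Fintype.card G : ℂ)) • ∑ g : G, starRingEnd ℂ (χ g) • (ρ g : V →ₗ[ℂ] V)

def onI {G : Type*} [One G] {k : ℕ} (g : G) (I : Finset (Fin k)) : Fin k → G :=
  fun i => if i ∈ I then g else 1

def invProj {G V : Type*} [Group G] [AddCommGroup V] [Module ℂ V] {k : ℕ}
    (ρ : Representation ℂ (Fin k → G) V) (m : G) : V →ₗ[ℂ] V :=
  ((2 : ℂ) ^ k)⁻¹ • ∑ I : Finset (Fin k), (ρ (onI m I) : V →ₗ[ℂ] V)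

def isoProjI {G V : Type*} [Group G] [Fintype G] [AddCommGroup V] [Module ℂ V] {k : ℕ}
    (ρ : Representation ℂ (Fin k → G) V) (d : ℕ) (χ : G → ℂ) (I : Finset (Fin k)) :
    V →ₗ[ℂ] V :=
  ((d : ℂ) / (Fintype.card G : ℂ)) • ∑ g : G, starRingEnd ℂ (χ g) • (ρ (onI g I) : V →ₗ[ℂ] V)

open scoped ComplexOrder

/-!
Since `ρ m` preserves norms, `‖(b + ρ m b) / 2‖² = (‖b‖² + Re ⟪b, ρ m b⟫) / 2`, so the variance on
the left is a quarter of that of `Re ⟪b, ρ m b⟫`, hence at most a quarter of the mean of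
`|⟪b, ρ m b⟫|²` over `M`. The right-hand side is exactly the latter quantity: after cancelling `d_j`
and exchanging the sums, the weight `∑ j, χ_j(m₀) * conj χ_j(g)` of `|⟪b, ρ g b⟫|²` is `|G| / |M|`
on `M` and zero elsewhere, by column orthogonality.

Column orthogonality is the character expansion of the indicator function of `M`. Characters span
the class functions because a class function orthogonal to all of them, viewed as a central element
of `ℂ[G]`, acts on every `σ j` by a scalar (Schur) of trace zero; it therefore kills every simple
module, and so vanishes because `ℂ[G]` is semisimple.
-/

open Module MonoidAlgebra

/-- `f` is a class function on `G`: it is constant on conjugacy classes. -/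
def IsClassFunction {G α : Type*} [Group G] (f : G → α) : Prop :=
  ∀ g h, f (h * g * h⁻¹) = f g

/-- The function `φ` on the finite monoid `G`, regarded as the element `∑ g, φ g • g` of the monoid
algebra; a representation maps it to the operator-valued Fourier coefficient of `φ`. -/
def toMonoidAlgebra {k G : Type*} [Semiring k] [Fintype G] (φ : G → k) : k[G] :=
  ∑ g, single g (φ g)

section Representation

variable {k G V V' : Type*} [Field k] [Monoid G] [AddCommGroup V] [Module k V]
  [AddCommGroup V'] [Module k V']

theorem equiv_asAlgebraHom_apply {ρ : Representation k G V} {ρ' : Representation k G V'}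
    (e : ρ.Equiv ρ') (a : k[G]) (v : V) :
    e (ρ.asAlgebraHom a v) = ρ'.asAlgebraHom a (e v) :=
  (Representation.IntertwiningMap.equivLinearMapAsModule ρ ρ' e.toIntertwiningMap).map_smul a v

theorem isIrreducible_of_equiv {ρ : Representation k G V} {ρ' : Representation k G V'}
    (e : ρ.Equiv ρ') [ρ'.IsIrreducible] : ρ.IsIrreducible := by
  let f : ρ.asModule →ₗ[k[G]] ρ'.asModule :=
    Representation.IntertwiningMap.equivLinearMapAsModule ρ ρ' e.toIntertwiningMap
  rw [Representation.irreducible_iff_isSimpleModule_asModule]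
  exact IsSimpleModule.congr (LinearEquiv.ofBijective f e.toLinearEquiv.bijective)

theorem nontrivial_of_isIrreducible (ρ : Representation k G V) [ρ.IsIrreducible] : Nontrivial V :=
  IsSimpleModule.nontrivial k[G] ρ.asModule

theorem finrank_smul_asAlgebraHom_of_mem_center [IsAlgClosed k] [FiniteDimensional k V]
    (ρ : Representation k G V) [ρ.IsIrreducible] {z : k[G]} (hz : z ∈ Submonoid.center k[G]) :
    (finrank k V : k) • ρ.asAlgebraHom z = LinearMap.trace k V (ρ.asAlgebraHom z) • 1 := by
  obtain ⟨c, hc⟩ :=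
    Representation.IsIrreducible.algebraMap_intertwiningMap_bijective_of_isAlgClosed.surjective
      (Representation.IntertwiningMap.centralAlgebraMul ρ hz)
  have h_scalar : ρ.asAlgebraHom z = c • 1 :=
    congrArg Representation.IntertwiningMap.toLinearMap hc.symm
  rw [h_scalar, map_smul, LinearMap.trace_one, smul_smul, smul_eq_mul, mul_comm]

theorem asAlgebraHom_ofModule'_apply {M : Type*} [AddCommGroup M] [Module k M] [Module k[G] M]
    [IsScalarTower k k[G] M] (a : k[G]) (m : M) :
    (Representation.ofModule' (k := k) (G := G) M).asAlgebraHom a m = a • m := by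
  simp [Representation.asAlgebraHom, Representation.ofModule']

theorem isIrreducible_ofModule' (M : Type*) [AddCommGroup M] [Module k M] [Module k[G] M]
    [IsScalarTower k k[G] M] [IsSimpleModule k[G] M] :
    (Representation.ofModule' (k := k) (G := G) M).IsIrreducible := by
  rw [Representation.irreducible_iff_isSimpleModule_asModule]
  let e : (Representation.ofModule' (k := k) (G := G) M).asModule ≃+ M :=
    (Representation.asModuleEquiv _).toAddEquiv
  exact IsSimpleModule.congr (e.toLinearEquiv fun a m ↦ asAlgebraHom_ofModule'_apply a (e m))

theorem asAlgebraHom_toMonoidAlgebra [Fintype G] (ρ : Representation k G V) (φ : G → k) :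
    ρ.asAlgebraHom (toMonoidAlgebra φ) = ∑ g, φ g • ρ g := by
  simp [toMonoidAlgebra]

end Representation

theorem coeff_toMonoidAlgebra {k G : Type*} [Semiring k] [Fintype G] (φ : G → k) (g : G) :
    (toMonoidAlgebra φ).coeff g = φ g := by
  classical
  simp [toMonoidAlgebra, coeff_sum, Finsupp.single_apply]

theorem IsClassFunction.toMonoidAlgebra_mem_center {k G : Type*} [CommSemiring k] [Group G]
    [Fintype G] {φ : G → k} (hφ : IsClassFunction φ) :
    toMonoidAlgebra φ ∈ Submonoid.center k[G] := by
  rw [Submonoid.mem_center_iff]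
  intro a
  induction a using MonoidAlgebra.induction_linear with
  | zero => simp
  | add a b ha hb => rw [add_mul, mul_add, ha, hb]
  | single h r =>
    simp only [toMonoidAlgebra, Finset.mul_sum, Finset.sum_mul, single_mul_single]
    rw [← (MulAut.conj h).toEquiv.sum_comp (fun g ↦ single (g * h) (φ g * r))]
    simp [hφ _ h, mul_comm]

theorem eq_zero_of_forall_smul_isSimpleModule {R : Type*} [Ring R] [IsSemisimpleRing R] {a : R}
    (h : ∀ (I : Ideal R) [IsSimpleModule R (R ⧸ I)] (q : R ⧸ I), a • q = 0) : a = 0 := by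
  have h_jacobson : a ∈ Ring.jacobson R := by
    refine Submodule.mem_sInf.2 fun I (hI : IsCoatom I) ↦ ?_
    have : IsSimpleModule R (R ⧸ I) := isSimpleModule_iff_isCoatom.2 hI
    rw [← Submodule.Quotient.mk_eq_zero, ← mul_one a, ← smul_eq_mul, Submodule.Quotient.mk_smul]
    exact h I _
  rwa [IsSemisimpleRing.jacobson_eq_bot, Submodule.mem_bot] at h_jacobson

section Predicates

variable {G V V' : Type*} [Group G]

theorem isIrreducibleRep_iff [AddCommGroup V] [Module ℂ V] {ρ : Representation ℂ G V} :
    IsIrreducibleRep ρ ↔ ρ.IsIrreducible := by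
  constructor
  · rintro ⟨⟨v, hv⟩, h_inv⟩
    refine { exists_pair_ne := ⟨⊥, ⊤, fun h ↦ hv ?_⟩, eq_bot_or_eq_top := fun p ↦ ?_ }
    · have hv_top : v ∈ (⊤ : Subrepresentation ρ) := Submodule.mem_top
      rwa [← h] at hv_top
    · exact (h_inv p.toSubmodule p.apply_mem_toSubmodule).imp
        (Subrepresentation.toSubmodule_injective ·) (Subrepresentation.toSubmodule_injective ·)
  · intro h
    have := nontrivial_of_isIrreducible ρ
    refine ⟨exists_ne 0, fun U hU ↦ ?_⟩
    exact (eq_bot_or_eq_top (⟨U, hU⟩ : Subrepresentation ρ)).imp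
      (congrArg Subrepresentation.toSubmodule) (congrArg Subrepresentation.toSubmodule)

theorem repIso_iff_nonempty_equiv [AddCommGroup V] [Module ℂ V] [AddCommGroup V'] [Module ℂ V']
    {ρ : Representation ℂ G V} {ρ' : Representation ℂ G V'} :
    RepIso ρ ρ' ↔ Nonempty (ρ.Equiv ρ') :=
  ⟨fun ⟨e, he⟩ ↦ ⟨.mk e fun g ↦ LinearMap.ext (he g)⟩,
    fun ⟨e⟩ ↦ ⟨e.toLinearEquiv, fun g ↦ LinearMap.congr_fun (e.isIntertwining' g)⟩⟩

theorem isClassFunction_repChar [AddCommGroup V] [Module ℂ V] (ρ : Representation ℂ G V) :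
    IsClassFunction (repChar ρ) :=
  ρ.char_conj

variable [NormedAddCommGroup V] [InnerProductSpace ℂ V] {ρ : Representation ℂ G V}

theorem IsUnitaryRep.norm_apply (h : IsUnitaryRep ρ) (g : G) (v : V) : ‖ρ g v‖ = ‖v‖ := by
  rw [norm_eq_sqrt_re_inner (𝕜 := ℂ), h, ← norm_eq_sqrt_re_inner]

theorem IsUnitaryRep.conj_repChar [FiniteDimensional ℂ V] (h : IsUnitaryRep ρ) (g : G) :
    starRingEnd ℂ (repChar ρ g) = repChar ρ g⁻¹ := by
  simp only [repChar, LinearMap.trace_eq_sum_inner _ (stdOrthonormalBasis ℂ V), map_sum,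
    inner_conj_symm]
  refine Finset.sum_congr rfl fun i _ ↦ ?_
  rw [← h g _ (ρ g⁻¹ _), ρ.self_inv_apply]

end Predicates

namespace IsCompleteFamily

variable {G : Type*} [Group G] {J : Type*} {W : J → Type*} [∀ j, NormedAddCommGroup (W j)]
  [∀ j, InnerProductSpace ℂ (W j)] [∀ j, FiniteDimensional ℂ (W j)]
  {σ : ∀ j, Representation ℂ G (W j)}

theorem isUnitaryRep (hσ : IsCompleteFamily W σ) (j : J) : IsUnitaryRep (σ j) :=
  hσ.1 j

theorem isIrreducible (hσ : IsCompleteFamily W σ) (j : J) : (σ j).IsIrreducible :=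
  isIrreducibleRep_iff.1 (hσ.2.1 j)

theorem finrank_ne_zero (hσ : IsCompleteFamily W σ) (j : J) : (finrank ℂ (W j) : ℂ) ≠ 0 := by
  have := hσ.isIrreducible j
  have := nontrivial_of_isIrreducible (σ j)
  exact_mod_cast finrank_pos.ne'

theorem nonempty_equiv_iff (hσ : IsCompleteFamily W σ) {i j : J} :
    Nonempty ((σ i).Equiv (σ j)) ↔ i = j := by
  refine ⟨fun h ↦ ?_, ?_⟩
  · by_contra hij
    exact hσ.2.2.1 i j hij (repIso_iff_nonempty_equiv.2 h)
  · rintro rfl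
    exact ⟨.refl _⟩

-- `IsCompleteFamily` only speaks of representations on spaces in `Type`, so `τ` is first
-- transported to a coordinate space.
theorem exists_nonempty_equiv (hσ : IsCompleteFamily W σ) {U : Type*} [AddCommGroup U]
    [Module ℂ U] [FiniteDimensional ℂ U] (τ : Representation ℂ G U) [τ.IsIrreducible] :
    ∃ j, Nonempty (τ.Equiv (σ j)) := by
  let e : U ≃ₗ[ℂ] (Fin (finrank ℂ U) → ℂ) := (finBasis ℂ U).equivFun
  let τ' : Representation ℂ G (Fin (finrank ℂ U) → ℂ) :=
    (e.conjAlgEquiv ℂ : End ℂ U →* End ℂ (Fin (finrank ℂ U) → ℂ)).comp τ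
  let eτ : τ.Equiv τ' := .mk e fun g ↦ by
    ext
    simp [τ', LinearEquiv.conjAlgEquiv_apply]
  have hτ' : τ'.IsIrreducible := isIrreducible_of_equiv eτ.symm
  obtain ⟨j, hj⟩ := hσ.2.2.2 _ τ' (isIrreducibleRep_iff.2 hτ')
  exact ⟨j, (repIso_iff_nonempty_equiv.1 hj).map eτ.trans⟩

theorem smul_eq_zero_of_isSimpleModule [Finite G] (hσ : IsCompleteFamily W σ) {a : ℂ[G]}
    (ha : ∀ j, (σ j).asAlgebraHom a = 0) {Q : Type*} [AddCommGroup Q] [Module ℂ Q] [Module ℂ[G] Q]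
    [IsScalarTower ℂ ℂ[G] Q] [IsSimpleModule ℂ[G] Q] (q : Q) : a • q = 0 := by
  have : Module.Finite ℂ Q := .trans ℂ[G] Q
  have := isIrreducible_ofModule' (k := ℂ) (G := G) Q
  obtain ⟨j, ⟨e⟩⟩ := hσ.exists_nonempty_equiv (Representation.ofModule' (k := ℂ) (G := G) Q)
  rw [← asAlgebraHom_ofModule'_apply]
  apply e.toLinearEquiv.injective
  simpa [ha] using equiv_asAlgebraHom_apply e a q

theorem eq_zero_of_asAlgebraHom_eq_zero [Finite G] (hσ : IsCompleteFamily W σ) {a : ℂ[G]}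
    (ha : ∀ j, (σ j).asAlgebraHom a = 0) : a = 0 :=
  eq_zero_of_forall_smul_isSimpleModule fun _ _ ↦ hσ.smul_eq_zero_of_isSimpleModule ha

variable [Fintype G]

theorem eq_zero_of_sum_mul_repChar_eq_zero (hσ : IsCompleteFamily W σ) {φ : G → ℂ}
    (hφ : IsClassFunction φ) (h : ∀ j, ∑ g, φ g * repChar (σ j) g = 0) : φ = 0 := by
  suffices h_zero : toMonoidAlgebra φ = 0 by
    ext g
    rw [← coeff_toMonoidAlgebra φ, h_zero]
    rfl
  refine hσ.eq_zero_of_asAlgebraHom_eq_zero fun j ↦ ?_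
  have := hσ.isIrreducible j
  have h_trace : LinearMap.trace ℂ (W j) ((σ j).asAlgebraHom (toMonoidAlgebra φ)) = 0 := by
    simpa [asAlgebraHom_toMonoidAlgebra, repChar] using h j
  have h_schur := finrank_smul_asAlgebraHom_of_mem_center (σ j) hφ.toMonoidAlgebra_mem_center
  rw [h_trace, zero_smul] at h_schur
  exact (smul_eq_zero.1 h_schur).resolve_left (hσ.finrank_ne_zero j)

theorem sum_conj_repChar_mul_repChar [DecidableEq J] (hσ : IsCompleteFamily W σ) (i j : J) :
    ∑ g, starRingEnd ℂ (repChar (σ i) g) * repChar (σ j) g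
      = if i = j then (Fintype.card G : ℂ) else 0 := by
  have hG : (Nat.card G : ℂ) ≠ 0 := by exact_mod_cast Nat.card_pos.ne'
  have := invertibleOfNonzero hG
  have := hσ.isIrreducible
  have h_orth := Representation.char_orthonormal (σ j) (σ i)
  rw [inv_mul_eq_iff_eq_mul₀ hG] at h_orth
  simp only [(hσ.isUnitaryRep i).conj_repChar, mul_comm (repChar (σ i) _⁻¹)]
  refine h_orth.trans ?_
  simp [hσ.nonempty_equiv_iff]

variable [Fintype J]

theorem eq_sum_mul_conj_repChar (hσ : IsCompleteFamily W σ) {φ : G → ℂ} (hφ : IsClassFunction φ)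
    (g : G) :
    φ g = ∑ j, ((Fintype.card G : ℂ)⁻¹ * ∑ x, φ x * repChar (σ j) x) *
      starRingEnd ℂ (repChar (σ j) g) := by
  classical
  let c : J → ℂ := fun j ↦ (Fintype.card G : ℂ)⁻¹ * ∑ x, φ x * repChar (σ j) x
  let ψ : G → ℂ := fun g ↦ φ g - ∑ j, c j * starRingEnd ℂ (repChar (σ j) g)
  suffices ψ = 0 from sub_eq_zero.1 (congrFun this g)
  refine hσ.eq_zero_of_sum_mul_repChar_eq_zero (fun g h ↦ ?_) fun i ↦ ?_
  · simp only [ψ, hφ g h, isClassFunction_repChar (σ _) g h]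
  · have h_expansion :
        ∑ g, (∑ j, c j * starRingEnd ℂ (repChar (σ j) g)) * repChar (σ i) g
          = c i * Fintype.card G := by
      simp only [Finset.sum_mul, mul_assoc]
      rw [Finset.sum_comm]
      simp [← Finset.mul_sum, hσ.sum_conj_repChar_mul_repChar]
    simp only [ψ, sub_mul, Finset.sum_sub_distrib]
    rw [h_expansion, mul_right_comm, inv_mul_cancel₀ (by simp), one_mul, sub_self]

theorem card_mul_sum_repChar_mul_conj_repChar [DecidableEq G] (hσ : IsCompleteFamily W σ)
    {M : Finset G} {m₀ : G} (hM : ∀ m, m ∈ M ↔ IsConj m₀ m) (g : G) :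
    (M.card : ℂ) * ∑ j, repChar (σ j) m₀ * starRingEnd ℂ (repChar (σ j) g)
      = if g ∈ M then (Fintype.card G : ℂ) else 0 := by
  have h_class : IsClassFunction fun g ↦ if g ∈ M then (1 : ℂ) else 0 := fun g h ↦ by
    have hg : IsConj g (h * g * h⁻¹) := isConj_iff.2 ⟨h, rfl⟩
    have h_mem : h * g * h⁻¹ ∈ M ↔ g ∈ M := by
      rw [hM, hM]
      exact ⟨(·.trans hg.symm), (·.trans hg)⟩
    simp only [h_mem]
  have h_const (j : J) : ∀ m ∈ M, repChar (σ j) m = repChar (σ j) m₀ := fun m hm ↦ by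
    obtain ⟨c, rfl⟩ := isConj_iff.1 ((hM m).1 hm)
    exact isClassFunction_repChar (σ j) m₀ c
  have h_coeff (j : J) : ∑ x, (if x ∈ M then (1 : ℂ) else 0) * repChar (σ j) x
      = M.card * repChar (σ j) m₀ := by
    simp [Finset.sum_congr rfl (h_const j)]
  have h_expansion := hσ.eq_sum_mul_conj_repChar h_class g
  simp only [h_coeff, mul_assoc, ← Finset.mul_sum] at h_expansion
  rw [eq_inv_mul_iff_mul_eq₀ (by simp)] at h_expansion
  simpa using h_expansion.symm

theorem sum_repChar_div_finrank_mul (hσ : IsCompleteFamily W σ) {M : Finset G} {m₀ : G}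
    (hM : ∀ m, m ∈ M ↔ IsConj m₀ m) (f : G → ℂ) :
    ∑ j, repChar (σ j) m₀ / finrank ℂ (W j) * (finrank ℂ (W j) / Fintype.card G *
        ∑ g, starRingEnd ℂ (repChar (σ j) g) * f g)
      = 1 / M.card * ∑ m ∈ M, f m := by
  classical
  have hM_card : (M.card : ℂ) ≠ 0 := by
    exact_mod_cast Finset.card_ne_zero_of_mem ((hM m₀).2 (IsConj.refl m₀))
  have h_column (g : G) : ∑ j, repChar (σ j) m₀ * starRingEnd ℂ (repChar (σ j) g)
      = if g ∈ M then (Fintype.card G / M.card : ℂ) else 0 := by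
    rw [← mul_right_inj' hM_card, hσ.card_mul_sum_repChar_mul_conj_repChar hM]
    rw [mul_ite, mul_div_cancel₀ _ hM_card, mul_zero]
  calc
    _ = ∑ j, ∑ g, (Fintype.card G : ℂ)⁻¹ *
          (repChar (σ j) m₀ * starRingEnd ℂ (repChar (σ j) g) * f g) := by
      refine Finset.sum_congr rfl fun j _ ↦ ?_
      have := hσ.finrank_ne_zero j
      simp only [mul_assoc, ← Finset.mul_sum]
      field_simp
    _ = (Fintype.card G : ℂ)⁻¹ *
          ∑ g, (if g ∈ M then (Fintype.card G / M.card : ℂ) else 0) * f g := by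
      rw [Finset.sum_comm]
      simp only [← Finset.mul_sum, ← Finset.sum_mul, h_column]
    _ = 1 / M.card * ∑ m ∈ M, f m := by
      simp only [ite_mul, zero_mul, Finset.sum_ite_mem, Finset.univ_inter, ← Finset.mul_sum]
      field_simp

end IsCompleteFamily

theorem norm_sq_half_smul_add {𝕜 E : Type*} [RCLike 𝕜] [SeminormedAddCommGroup E]
    [InnerProductSpace 𝕜 E] {v w : E} (h : ‖w‖ = ‖v‖) :
    ‖(1 / 2 : 𝕜) • (v + w)‖ ^ 2 = 1 / 2 * (‖v‖ ^ 2 + RCLike.re (inner 𝕜 v w)) := by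
  rw [norm_smul, mul_pow, norm_add_sq (𝕜 := 𝕜), h]
  simp only [one_div, norm_inv, RCLike.norm_ofNat]
  ring

theorem variance_mul_const_add_le {ι : Type*} {s : Finset ι} (hs : s.Nonempty) (c a : ℝ)
    (Y : ι → ℝ) :
    1 / (s.card : ℝ) * ∑ i ∈ s, (c * (a + Y i)) ^ 2
        - (1 / (s.card : ℝ) * ∑ i ∈ s, c * (a + Y i)) ^ 2
      ≤ c ^ 2 * (1 / (s.card : ℝ) * ∑ i ∈ s, Y i ^ 2) := by
  have hs_card : (s.card : ℝ) ≠ 0 := by exact_mod_cast hs.card_ne_zero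
  have h_sum : ∑ i ∈ s, c * (a + Y i) = c * (s.card * a + ∑ i ∈ s, Y i) := by
    simp [← Finset.mul_sum, Finset.sum_add_distrib]
  have h_sum_sq : ∑ i ∈ s, (c * (a + Y i)) ^ 2
      = c ^ 2 * (s.card * a ^ 2 + 2 * a * ∑ i ∈ s, Y i + ∑ i ∈ s, Y i ^ 2) := by
    simp [mul_pow, add_sq, ← Finset.mul_sum, Finset.sum_add_distrib]
  rw [h_sum, h_sum_sq]
  have h_variance : 1 / (s.card : ℝ) *
        (c ^ 2 * (s.card * a ^ 2 + 2 * a * ∑ i ∈ s, Y i + ∑ i ∈ s, Y i ^ 2))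
        - (1 / (s.card : ℝ) * (c * (s.card * a + ∑ i ∈ s, Y i))) ^ 2
      = c ^ 2 * (1 / (s.card : ℝ) * ∑ i ∈ s, Y i ^ 2)
        - (c / s.card * ∑ i ∈ s, Y i) ^ 2 := by
    field_simp
    ring
  rw [h_variance]
  exact sub_le_self _ (sq_nonneg _)

theorem variance_norm_sq_half_smul_add_le {𝕜 E ι : Type*} [RCLike 𝕜] [SeminormedAddCommGroup E]
    [InnerProductSpace 𝕜 E] {s : Finset ι} (hs : s.Nonempty) {v : E} {w : ι → E}
    (hw : ∀ i ∈ s, ‖w i‖ = ‖v‖) :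
    1 / (s.card : ℝ) * ∑ i ∈ s, (‖(1 / 2 : 𝕜) • (v + w i)‖ ^ 2) ^ 2
        - (1 / (s.card : ℝ) * ∑ i ∈ s, ‖(1 / 2 : 𝕜) • (v + w i)‖ ^ 2) ^ 2
      ≤ 1 / 4 * (1 / (s.card : ℝ) * ∑ i ∈ s, ‖inner 𝕜 v (w i)‖ ^ 2) := by
  have h_norm := fun i hi ↦ norm_sq_half_smul_add (𝕜 := 𝕜) (hw i hi)
  calc
    _ = 1 / (s.card : ℝ) * ∑ i ∈ s, (1 / 2 * (‖v‖ ^ 2 + RCLike.re (inner 𝕜 v (w i)))) ^ 2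
        - (1 / (s.card : ℝ) * ∑ i ∈ s, 1 / 2 * (‖v‖ ^ 2 + RCLike.re (inner 𝕜 v (w i)))) ^ 2 := by
      rw [Finset.sum_congr rfl h_norm, Finset.sum_congr rfl fun i hi ↦ by rw [h_norm i hi]]
    _ ≤ (1 / 2) ^ 2 * (1 / (s.card : ℝ) * ∑ i ∈ s, RCLike.re (inner 𝕜 v (w i)) ^ 2) :=
      variance_mul_const_add_le hs _ _ _
    _ ≤ 1 / 4 * (1 / (s.card : ℝ) * ∑ i ∈ s, ‖inner 𝕜 v (w i)‖ ^ 2) := by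
      norm_num only
      gcongr _ * (_ * ∑ i ∈ _, ?_) with i
      exact sq_le_sq.2 ((RCLike.abs_re_le_norm _).trans (le_abs_self _))

theorem stmt4_general {G : Type*} [Group G] [Fintype G]
    {J : Type*} [Fintype J]
    (W : J → Type*) [∀ j, NormedAddCommGroup (W j)] [∀ j, InnerProductSpace ℂ (W j)]
    [∀ j, FiniteDimensional ℂ (W j)]
    (σ : ∀ j, Representation ℂ G (W j)) (hfam : IsCompleteFamily W σ)
    {V : Type*} [NormedAddCommGroup V] [InnerProductSpace ℂ V]
    (ρ : Representation ℂ G V) (hρu : IsUnitaryRep ρ)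
    (M : Finset G) (m₀ : G)
    (hM : ∀ m : G, m ∈ M ↔ IsConj m₀ m)
    (b : V) :
    (((1 / (M.card : ℝ)) * ∑ m ∈ M, (‖(1/2 : ℂ) • (b + ρ m b)‖ ^ 2) ^ 2
        - ((1 / (M.card : ℝ)) * ∑ m ∈ M, ‖(1/2 : ℂ) • (b + ρ m b)‖ ^ 2) ^ 2 : ℝ) : ℂ)
      ≤ (1/4 : ℂ) * ∑ j, repChar (σ j) m₀ / (Module.finrank ℂ (W j) : ℂ) *
          ((Module.finrank ℂ (W j) : ℂ) / (Fintype.card G : ℂ) *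
            ∑ g : G, starRingEnd ℂ (repChar (σ j) g) * (‖⟪b, ρ g b⟫_ℂ‖ : ℂ) ^ 2) := by
  have h_nonempty : M.Nonempty := ⟨m₀, (hM m₀).2 (IsConj.refl m₀)⟩
  rw [hfam.sum_repChar_div_finrank_mul hM fun g ↦ (‖⟪b, ρ g b⟫_ℂ‖ : ℂ) ^ 2]
  have h_variance :=
    variance_norm_sq_half_smul_add_le (𝕜 := ℂ) h_nonempty fun m _ ↦ hρu.norm_apply m b
  rw [← Complex.real_le_real] at h_variance
  simpa using h_variance

/-- Variance bound for one register: with `X m = ‖(1/2)(b + ρ m b)‖²`,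
`Var_{m∈M} X ≤ (1/4) Σ_j (χ_j(m₀)/d_j) s_j(b)` where
`s_j(b) = (d_j/|G|) Σ_g conj(χ_j(g)) |⟪b, ρ g b⟫|²`. -/
theorem stmt4 {G : Type*} [Group G] [Fintype G]
    {J : Type*} [Fintype J]
    (W : J → Type*) [∀ j, NormedAddCommGroup (W j)] [∀ j, InnerProductSpace ℂ (W j)]
    [∀ j, FiniteDimensional ℂ (W j)]
    (σ : ∀ j, Representation ℂ G (W j)) (hfam : IsCompleteFamily W σ)
    {V : Type*} [NormedAddCommGroup V] [InnerProductSpace ℂ V] [FiniteDimensional ℂ V]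
    (ρ : Representation ℂ G V) (hρu : IsUnitaryRep ρ) (hρi : IsIrreducibleRep ρ)
    (M : Finset G) (m₀ : G) (hm₀M : m₀ ∈ M)
    (hM : ∀ m : G, m ∈ M ↔ IsConj m₀ m)
    (hinv : ∀ m ∈ M, m * m = 1 ∧ m ≠ 1)
    (b : V) :
    (((1 / (M.card : ℝ)) * ∑ m ∈ M, (‖(1/2 : ℂ) • (b + ρ m b)‖ ^ 2) ^ 2
        - ((1 / (M.card : ℝ)) * ∑ m ∈ M, ‖(1/2 : ℂ) • (b + ρ m b)‖ ^ 2) ^ 2 : ℝ) : ℂ)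
      ≤ (1/4 : ℂ) * ∑ j, repChar (σ j) m₀ / (Module.finrank ℂ (W j) : ℂ) *
          ((Module.finrank ℂ (W j) : ℂ) / (Fintype.card G : ℂ) *
            ∑ g : G, starRingEnd ℂ (repChar (σ j) g) * (‖⟪b, ρ g b⟫_ℂ‖ : ℂ) ^ 2) := by
  exact stmt4_general W σ hfam ρ hρu M m₀ hM b
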